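/- arXiv:1305.6408 — 6 statements merged into one kernel-verified Lean document; each statement's English description precedes it below -/
import Mathlib

section
/- Let (T,d) be a locally compact, separable metric space and let f_n, f ∈ ℓ∞_loc(T). Then the epigraphs epi f_n converge in the Painlevé–Kuratowski sense to epi f_∧ and the hypographs hypo f_n converge in the Painlevé–Kuratowski sense to hypo f_∨ if and only if f_n hypi-converges to f, i.e., for every x ∈ T: (a) liminf_n f_n(x_n) ≥ f_∧(x) for every sequence x_n → x; (b) there exists a sequence x_n → x with limsup_n f_n(x_n) ≤ f_∧(x); (c) limsup_n f_n(x_n) ≤ f_∨(x) for every sequence x_n → x; (d) there exists a sequence x_n → x with liminf_n f_n(x_n) ≥ f_∨(x). -/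
/-!
Epi-convergence of `F n` to `g` is convergence of epigraphs for an arbitrary `g : T → EReal`.
Condition (a) says that limits of subsequences of points of the epigraphs stay in the epigraph of
`g`: extend the subsequence by its limit point to a full sequence, and conversely cut a violation
of (a) at a real level strictly between the lower limit and `g x`. For condition (b), the points of
the epigraph above `x` have real heights while `g x` may be `⊥`, so the recovery sequence at
`(x, g x)` is obtained by diagonalizing over the recovery sequences at the points `(x, r)` with `r`
real and `r > g x`. The statement for hypographs follows by the reflection `(x, y) ↦ (x, -y)`.
-/

open Filter Topology Metric

variable {T : Type*}

/-- Lower semicontinuous hull of a real-valued function on a metric space,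
with values in the extended reals. -/
noncomputable def lscHull [MetricSpace T] (f : T → ℝ) (x : T) : EReal :=
  ⨆ (ε : ℝ) (_ : 0 < ε), ⨅ (y : T) (_ : y ∈ Metric.ball x ε), (f y : EReal)

/-- Upper semicontinuous hull. -/
noncomputable def uscHull [MetricSpace T] (f : T → ℝ) (x : T) : EReal :=
  ⨅ (ε : ℝ) (_ : 0 < ε), ⨆ (y : T) (_ : y ∈ Metric.ball x ε), (f y : EReal)

/-- Locally bounded: bounded on every compact set. -/
def LocBounded [MetricSpace T] (f : T → ℝ) : Prop :=
  ∀ K : Set T, IsCompact K → ∃ M : ℝ, ∀ x ∈ K, |f x| ≤ M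

/-- Hypi-convergence of a sequence of functions via the pointwise criteria. -/
def HypiConv [MetricSpace T] (F : ℕ → T → ℝ) (f : T → ℝ) : Prop :=
  ∀ x : T,
    (∀ u : ℕ → T, Tendsto u atTop (𝓝 x) →
      lscHull f x ≤ liminf (fun n => ((F n (u n) : ℝ) : EReal)) atTop) ∧
    (∃ u : ℕ → T, Tendsto u atTop (𝓝 x) ∧
      limsup (fun n => ((F n (u n) : ℝ) : EReal)) atTop ≤ lscHull f x) ∧
    (∀ u : ℕ → T, Tendsto u atTop (𝓝 x) →
      limsup (fun n => ((F n (u n) : ℝ) : EReal)) atTop ≤ uscHull f x) ∧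
    (∃ u : ℕ → T, Tendsto u atTop (𝓝 x) ∧
      uscHull f x ≤ liminf (fun n => ((F n (u n) : ℝ) : EReal)) atTop)

/-- Epigraph of a real-valued function, as a subset of `T × ℝ`. -/
def epigraph [MetricSpace T] (f : T → ℝ) : Set (T × ℝ) := {p | f p.1 ≤ p.2}

/-- Hypograph of a real-valued function. -/
def hypograph [MetricSpace T] (f : T → ℝ) : Set (T × ℝ) := {p | p.2 ≤ f p.1}

/-- Epigraph of an extended-real-valued function, as a subset of `T × ℝ`. -/
def epigraphE [MetricSpace T] (g : T → EReal) : Set (T × ℝ) := {p | g p.1 ≤ (p.2 : EReal)}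

/-- Hypograph of an extended-real-valued function. -/
def hypographE [MetricSpace T] (g : T → EReal) : Set (T × ℝ) := {p | (p.2 : EReal) ≤ g p.1}

/-- Painlevé–Kuratowski convergence of a sequence of subsets of `T × ℝ` to a set `L`:
(i) every point of `L` is the limit of a sequence of points of the `A n`;
(ii) every limit of a converging subsequence of points of the `A n` belongs to `L`. -/
def PKConv [MetricSpace T] (A : ℕ → Set (T × ℝ)) (L : Set (T × ℝ)) : Prop :=
  (∀ a ∈ L, ∃ u : ℕ → T × ℝ, (∀ n, u n ∈ A n) ∧ Tendsto u atTop (𝓝 a)) ∧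
  (∀ φ : ℕ → ℕ, StrictMono φ →
    ∀ u : ℕ → T × ℝ, (∀ k, u k ∈ A (φ k)) →
      ∀ a : T × ℝ, Tendsto u atTop (𝓝 a) → a ∈ L)

theorem tendsto_extend {α β γ : Type*} {φ : α → β} (hφ : φ.Injective) {l : Filter β} {l' : Filter γ}
    {w : α → γ} {e : β → γ} (hw : Tendsto w (comap φ l) l') (he : Tendsto e l l') :
    Tendsto (Function.extend φ w e) l l' := by
  intro U hU
  rw [mem_map]
  obtain ⟨V, hV, hVU⟩ := hw hU
  filter_upwards [hV, he.eventually_mem hU] with b hbV hbU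
  by_cases hb : ∃ a, φ a = b
  · obtain ⟨a, rfl⟩ := hb
    simpa only [Set.mem_preimage, hφ.extend_apply] using hVU hbV
  · simpa only [Set.mem_preimage, Function.extend_apply' _ _ _ hb] using hbU

theorem exists_tendsto_comp_eq {X : Type*} [TopologicalSpace X] {φ : ℕ → ℕ} (hφ : StrictMono φ)
    {w : ℕ → X} {x : X} (hw : Tendsto w atTop (𝓝 x)) :
    ∃ v : ℕ → X, Tendsto v atTop (𝓝 x) ∧ v ∘ φ = w := by
  have hcomap : comap φ atTop = atTop :=
    comap_embedding_atTop (fun _ _ => hφ.le_iff_le) fun n => ⟨n, hφ.le_apply⟩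
  exact ⟨Function.extend φ w fun _ => x,
    tendsto_extend hφ.injective (by rwa [hcomap]) tendsto_const_nhds,
    Function.extend_comp hφ.injective w _⟩

theorem exists_seq_mem_tendsto_of_forall_nhds {X : Type*} [TopologicalSpace X] {A : ℕ → Set X}
    {a : X} [(𝓝 a).IsCountablyGenerated] (h : ∀ U ∈ 𝓝 a, ∀ᶠ n in atTop, (A n ∩ U).Nonempty) :
    ∃ u : ℕ → X, (∀ᶠ n in atTop, u n ∈ A n) ∧ Tendsto u atTop (𝓝 a) := by
  -- `h` is lower hemicontinuity at infinity of `A` extended by `{a}`, and the sequential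
  -- characterization of lower hemicontinuity carries out the diagonal argument.
  let B : OnePoint ℕ → Set X := fun m => m.elim {a} A
  have hB : LowerHemicontinuousAt B OnePoint.infty := by
    refine lowerHemicontinuousAt_iff.2 fun U hU hBU => ?_
    have haU : a ∈ U := Set.singleton_inter_nonempty.1 hBU
    rw [OnePoint.nhds_infty_eq, coclosedCompact_eq_cocompact, cocompact_eq_cofinite,
      Nat.cofinite_eq_atTop]
    exact eventually_sup.2 ⟨h U (hU.mem_nhds haU), hBU⟩
  have hcoe : Tendsto ((↑) : ℕ → OnePoint ℕ) atTop (𝓝 OnePoint.infty) := by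
    simpa using OnePoint.tendsto_coe_infty (X := ℕ)
  exact hB.exists_seq_tendsto hcoe rfl

theorem tendsto_max_of_limsup_le {α : Type*} {l : Filter α} {v : α → ℝ} {y : ℝ}
    (h : limsup (fun i => (v i : EReal)) l ≤ y) : Tendsto (fun i => max y (v i)) l (𝓝 y) := by
  refine tendsto_order.2 ⟨fun a ha => .of_forall fun i => lt_max_of_lt_left ha, fun a ha => ?_⟩
  filter_upwards [eventually_lt_of_limsup_lt (h.trans_lt (EReal.coe_lt_coe ha))] with i hi
  exact max_lt ha (EReal.coe_lt_coe_iff.1 hi)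

/-- Epi-convergence of real-valued functions to an extended-real-valued limit, by the pointwise
sequential criteria: the lower half of `HypiConv`, with an arbitrary limit `g` instead of a
semicontinuous hull. -/
def EpiConv {X : Type*} [TopologicalSpace X] (F : ℕ → X → ℝ) (g : X → EReal) : Prop :=
  ∀ x : X,
    (∀ u : ℕ → X, Tendsto u atTop (𝓝 x) →
      g x ≤ liminf (fun n => (F n (u n) : EReal)) atTop) ∧
    (∃ u : ℕ → X, Tendsto u atTop (𝓝 x) ∧
      limsup (fun n => (F n (u n) : EReal)) atTop ≤ g x)

/-- Hypo-convergence of real-valued functions to an extended-real-valued limit, by the pointwise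
sequential criteria: the upper half of `HypiConv`, with an arbitrary limit `g` instead of a
semicontinuous hull. -/
def HypoConv {X : Type*} [TopologicalSpace X] (F : ℕ → X → ℝ) (g : X → EReal) : Prop :=
  ∀ x : X,
    (∀ u : ℕ → X, Tendsto u atTop (𝓝 x) →
      limsup (fun n => (F n (u n) : EReal)) atTop ≤ g x) ∧
    (∃ u : ℕ → X, Tendsto u atTop (𝓝 x) ∧
      g x ≤ liminf (fun n => (F n (u n) : EReal)) atTop)

theorem epiConv_neg_iff {X : Type*} [TopologicalSpace X] {F : ℕ → X → ℝ} {g : X → EReal} :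
    EpiConv (-F) (-g) ↔ HypoConv F g := by
  have hneg (u : ℕ → X) : (fun n => ((-F n (u n) : ℝ) : EReal)) = -fun n => (F n (u n) : EReal) :=
    rfl
  simp only [EpiConv, HypoConv, Pi.neg_apply, hneg, EReal.liminf_neg, EReal.limsup_neg,
    EReal.neg_le_neg_iff]

section Metric

variable [MetricSpace T] {F : ℕ → T → ℝ} {f : T → ℝ} {g : T → EReal}

theorem hypiConv_iff : HypiConv F f ↔ EpiConv F (lscHull f) ∧ HypoConv F (uscHull f) := by
  simp only [HypiConv, EpiConv, HypoConv, ← forall_and, and_assoc]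

theorem PKConv.le_liminf (h : PKConv (fun n => epigraph (F n)) (epigraphE g)) {u : ℕ → T} {x : T}
    (hu : Tendsto u atTop (𝓝 x)) : g x ≤ liminf (fun n => (F n (u n) : EReal)) atTop := by
  by_contra! hlt
  obtain ⟨c, hc, hcg⟩ := EReal.lt_iff_exists_real_btwn.1 hlt
  obtain ⟨φ, hφ, hFc⟩ := extraction_of_frequently_atTop (frequently_lt_of_liminf_lt (h := hc))
  have hmem : g x ≤ c :=
    h.2 φ hφ (fun k => (u (φ k), c)) (fun k => (EReal.coe_lt_coe_iff.1 (hFc k)).le) (x, c)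
      ((hu.comp hφ.tendsto_atTop).prodMk_nhds tendsto_const_nhds)
  exact hmem.not_gt hcg

theorem PKConv.eventually_epigraph_inter_nonempty
    (h : PKConv (fun n => epigraph (F n)) (epigraphE g)) {x : T} (hx : g x < ⊤)
    {U : Set (T × EReal)} (hU : U ∈ 𝓝 (x, g x)) :
    ∀ᶠ n in atTop, (Prod.map id Real.toEReal '' epigraph (F n) ∩ U).Nonempty := by
  have hgU : ∀ᶠ b in 𝓝 (g x), U ∈ 𝓝 (x, b) :=
    ((Continuous.prodMk_right x).tendsto (g x)).eventually (eventually_mem_nhds_iff.2 hU)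
  obtain ⟨b, hb, hbU⟩ := exists_Ico_subset_of_mem_nhds hgU ⟨⊤, hx⟩
  obtain ⟨r, hgr, hrb⟩ := EReal.lt_iff_exists_real_btwn.1 hb
  obtain ⟨u, hu, hur⟩ := h.1 (x, r) hgr.le
  have hlim : Tendsto (fun n => Prod.map id Real.toEReal (u n)) atTop (𝓝 (x, (r : EReal))) :=
    ((continuous_id.prodMap continuous_coe_real_ereal).tendsto (x, r)).comp hur
  filter_upwards [hlim (hbU ⟨hgr.le, hrb⟩)] with n hn
  exact ⟨_, Set.mem_image_of_mem _ (hu n), hn⟩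

theorem PKConv.exists_limsup_le (h : PKConv (fun n => epigraph (F n)) (epigraphE g)) (x : T) :
    ∃ u : ℕ → T, Tendsto u atTop (𝓝 x) ∧
      limsup (fun n => (F n (u n) : EReal)) atTop ≤ g x := by
  obtain hx | hx := eq_top_or_lt_top (g x)
  · exact ⟨fun _ => x, tendsto_const_nhds, hx ▸ le_top⟩
  obtain ⟨p, hp, hpx⟩ := exists_seq_mem_tendsto_of_forall_nhds fun _ hU =>
    h.eventually_epigraph_inter_nonempty hx hU
  have hle : ∀ᶠ n in atTop, (F n (p n).1 : EReal) ≤ (p n).2 := by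
    filter_upwards [hp] with n hn
    obtain ⟨q, hq, hqp⟩ := hn
    rw [← hqp]
    exact EReal.coe_le_coe hq
  exact ⟨fun n => (p n).1, hpx.fst_nhds, (limsup_le_limsup hle).trans_eq hpx.snd_nhds.limsup_eq⟩

theorem EpiConv.exists_seq_mem_epigraph (h : EpiConv F g) {a : T × ℝ} (ha : a ∈ epigraphE g) :
    ∃ u : ℕ → T × ℝ, (∀ n, u n ∈ epigraph (F n)) ∧ Tendsto u atTop (𝓝 a) := by
  obtain ⟨u, hu, hlim⟩ := (h a.1).2
  exact ⟨fun n => (u n, max a.2 (F n (u n))), fun n => le_max_right a.2 (F n (u n)),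
    hu.prodMk_nhds (tendsto_max_of_limsup_le (hlim.trans ha))⟩

theorem EpiConv.mem_epigraphE_of_tendsto (h : EpiConv F g) {φ : ℕ → ℕ} (hφ : StrictMono φ)
    {u : ℕ → T × ℝ} (hu : ∀ k, u k ∈ epigraph (F (φ k))) {a : T × ℝ} (ha : Tendsto u atTop (𝓝 a)) :
    a ∈ epigraphE g := by
  obtain ⟨v, hv, hvu⟩ := exists_tendsto_comp_eq hφ ha.fst_nhds
  have hle (k : ℕ) : (F (φ k) (v (φ k)) : EReal) ≤ ((u k).2 : EReal) := by
    rw [← Function.comp_apply (f := v), hvu]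
    exact EReal.coe_le_coe (hu k)
  calc g a.1 ≤ liminf (fun n => (F n (v n) : EReal)) atTop := (h a.1).1 v hv
    _ ≤ liminf (fun k => (F (φ k) (v (φ k)) : EReal)) atTop :=
      hφ.tendsto_atTop.liminf_le_liminf_comp
    _ ≤ liminf (fun k => ((u k).2 : EReal)) atTop := liminf_le_liminf (.of_forall hle)
    _ = a.2 := (EReal.tendsto_coe.2 ha.snd_nhds).liminf_eq

theorem pkConv_epigraph_iff : PKConv (fun n => epigraph (F n)) (epigraphE g) ↔ EpiConv F g :=
  ⟨fun h x => ⟨fun _ hu => h.le_liminf hu, h.exists_limsup_le x⟩,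
    fun h => ⟨fun _ ha => h.exists_seq_mem_epigraph ha,
      fun _ hφ _ hu _ ha => h.mem_epigraphE_of_tendsto hφ hu ha⟩⟩

theorem PKConv.preimage {S : Type*} [MetricSpace S] {A : ℕ → Set (T × ℝ)} {L : Set (T × ℝ)}
    (h : PKConv A L) (e : S × ℝ ≃ₜ T × ℝ) : PKConv (fun n => e ⁻¹' A n) (e ⁻¹' L) := by
  refine ⟨fun a ha => ?_, fun φ hφ u hu a ha => ?_⟩
  · obtain ⟨u, hu, hlim⟩ := h.1 (e a) ha
    exact ⟨e.symm ∘ u, fun n => by simpa using hu n,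
      by simpa using (e.symm.continuous.tendsto (e a)).comp hlim⟩
  · exact h.2 φ hφ (e ∘ u) hu (e a) ((e.continuous.tendsto a).comp ha)

theorem pkConv_preimage_iff {S : Type*} [MetricSpace S] {A : ℕ → Set (T × ℝ)} {L : Set (T × ℝ)}
    (e : S × ℝ ≃ₜ T × ℝ) : PKConv (fun n => e ⁻¹' A n) (e ⁻¹' L) ↔ PKConv A L :=
  ⟨fun h => by simpa [Set.preimage_preimage] using h.preimage e.symm, fun h => h.preimage e⟩

theorem pkConv_hypograph_iff : PKConv (fun n => hypograph (F n)) (hypographE g) ↔ HypoConv F g := by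
  let e : T × ℝ ≃ₜ T × ℝ := (Homeomorph.refl T).prodCongr (Homeomorph.neg ℝ)
  have hhypo (n : ℕ) : hypograph (F n) = e ⁻¹' epigraph ((-F) n) := by
    ext p
    exact (neg_le_neg_iff (α := ℝ)).symm
  have hhypoE : hypographE g = e ⁻¹' epigraphE (-g) := by
    ext p
    exact EReal.neg_le_neg_iff.symm
  simp_rw [hhypo, hhypoE]
  rw [pkConv_preimage_iff, pkConv_epigraph_iff, epiConv_neg_iff]

end Metric

theorem stmt0_general [MetricSpace T] (F : ℕ → T → ℝ) (f : T → ℝ) :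
    (PKConv (fun n => epigraph (F n)) (epigraphE (lscHull f)) ∧
      PKConv (fun n => hypograph (F n)) (hypographE (uscHull f))) ↔
      HypiConv F f := by
  rw [pkConv_epigraph_iff, pkConv_hypograph_iff, hypiConv_iff]

/-- On a locally compact separable metric space, for locally bounded
functions `F n` and `f`, Painlevé–Kuratowski convergence of the epigraphs of `F n`
to the epigraph of the lsc hull of `f` together with Painlevé–Kuratowski convergence
of the hypographs of `F n` to the hypograph of the usc hull of `f` is equivalent to
hypi-convergence of `F n` to `f`. -/
theorem stmt0 [MetricSpace T] [LocallyCompactSpace T] [TopologicalSpace.SeparableSpace T]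
    (F : ℕ → T → ℝ) (f : T → ℝ)
    (hF : ∀ n, LocBounded (F n)) (hf : LocBounded f) :
    (PKConv (fun n => epigraph (F n)) (epigraphE (lscHull f)) ∧
      PKConv (fun n => hypograph (F n)) (hypographE (uscHull f))) ↔
      HypiConv F f :=
  stmt0_general F f
end

section
/- Let (T,d) be a locally compact, separable metric space, let K ⊆ T be compact, and let f ∈ ℓ∞_loc(T) be continuous at every point of K. If f_n ∈ ℓ∞_loc(T) hypi-converges to f, then sup_{x ∈ K} |f_n(x) − f(x)| → 0 as n → ∞. -/
open Filter Topology Metric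

variable {T : Type*}

/-!
Where `f` is continuous both hulls equal `f`, so the two liminf/limsup inequalities of
hypi-convergence squeeze `F n (u n)` to `f x` along every sequence `u → x`. This is continuous
convergence of `F` to `f` at `x`: any sequence of pairs `(n, y) → (∞, x)` can be thinned out to have
strictly increasing first coordinate, and then filled up to a full sequence `u → x`. Continuous
convergence to a continuous limit is locally uniform, hence uniform on compact sets.
-/

section ContinuousConvergence

variable {α β γ : Type*}

theorem tendsto_extend_of_tendsto_comap {φ : α → β} (hφ : φ.Injective) {g : α → γ} {e : β → γ}
    {l : Filter β} {m : Filter γ} (hg : Tendsto g (comap φ l) m) (he : Tendsto e l m) :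
    Tendsto (Function.extend φ g e) l m := by
  refine tendsto_iff_forall_eventually_mem.2 fun s hs ↦ ?_
  obtain ⟨t, ht, hts⟩ := mem_comap.1 (hg hs)
  filter_upwards [ht, he.eventually_mem hs] with b hbt hbs
  by_cases hb : ∃ a, φ a = b
  · obtain ⟨a, rfl⟩ := hb
    rw [hφ.extend_apply]
    exact hts hbt
  · rwa [Function.extend_apply' _ _ _ hb]

theorem tendsto_uncurry_of_seq_tendsto {F : ℕ → α → β} {l : Filter α} [l.IsCountablyGenerated]
    {m : Filter β}
    (h : ∀ u : ℕ → α, Tendsto u atTop l → Tendsto (fun n ↦ F n (u n)) atTop m) :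
    Tendsto (Function.uncurry F) (atTop ×ˢ l) m := by
  refine tendsto_of_subseq_tendsto fun s hs ↦ ?_
  have hs_fst : Tendsto (fun k ↦ (s k).1) atTop atTop := tendsto_fst.comp hs
  have hs_snd : Tendsto (fun k ↦ (s k).2) atTop l := tendsto_snd.comp hs
  obtain ⟨ψ, hψ, hφ⟩ := strictMono_subseq_of_tendsto_atTop hs_fst
  set φ : ℕ → ℕ := (fun k ↦ (s k).1) ∘ ψ
  have hφ_comap : comap φ atTop = atTop := by
    simpa only [Nat.cofinite_eq_atTop] using hφ.injective.comap_cofinite_eq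
  have hu : Tendsto (Function.extend φ (fun k ↦ (s (ψ k)).2) fun k ↦ (s k).2) atTop l :=
    tendsto_extend_of_tendsto_comap hφ.injective
      (hφ_comap.symm ▸ hs_snd.comp hψ.tendsto_atTop) hs_snd
  have hFu := (h _ hu).comp hφ.tendsto_atTop
  simp only [Function.comp_def, hφ.injective.extend_apply] at hFu
  exact ⟨ψ, hFu⟩

theorem tendstoLocallyUniformlyOn_of_tendsto_uncurry [TopologicalSpace α] [UniformSpace β]
    {F : γ → α → β} {f : α → β} {p : Filter γ} {s : Set α} (hf : ContinuousOn f s)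
    (hF : ∀ x ∈ s, Tendsto (Function.uncurry F) (p ×ˢ 𝓝[s] x) (𝓝 (f x))) :
    TendstoLocallyUniformlyOn F f p s :=
  tendstoLocallyUniformlyOn_iff_forall_tendsto.2 fun x hx ↦
    (((hf x hx).tendsto.comp tendsto_snd).prodMk_nhds (hF x hx)).mono_right
      (nhds_le_uniformity (f x))

end ContinuousConvergence

section Hulls

variable [MetricSpace T] {f : T → ℝ} {x : T}

theorem le_lscHull_of_lowerSemicontinuousAt (h : LowerSemicontinuousAt f x) :
    (f x : EReal) ≤ lscHull f x := by
  refine EReal.ge_of_forall_gt_iff_ge.1 fun c hc ↦ ?_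
  obtain ⟨ε, hε, hball⟩ := eventually_nhds_iff_ball.1 (h c (EReal.coe_lt_coe_iff.1 hc))
  exact le_iSup₂_of_le ε hε (le_iInf₂ fun y hy ↦ EReal.coe_le_coe (hball y hy).le)

theorem uscHull_le_of_upperSemicontinuousAt (h : UpperSemicontinuousAt f x) :
    uscHull f x ≤ (f x : EReal) := by
  refine EReal.le_of_forall_lt_iff_le.1 fun c hc ↦ ?_
  obtain ⟨ε, hε, hball⟩ := eventually_nhds_iff_ball.1 (h c (EReal.coe_lt_coe_iff.1 hc))
  exact iInf₂_le_of_le ε hε (iSup₂_le fun y hy ↦ EReal.coe_le_coe (hball y hy).le)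

end Hulls

namespace HypiConv

variable [MetricSpace T] {F : ℕ → T → ℝ} {f : T → ℝ} {x : T}

theorem tendsto_of_continuousAt (h : HypiConv F f) (hf : ContinuousAt f x) {u : ℕ → T}
    (hu : Tendsto u atTop (𝓝 x)) : Tendsto (fun n ↦ F n (u n)) atTop (𝓝 (f x)) := by
  obtain ⟨h_liminf, -, h_limsup, -⟩ := h x
  exact EReal.tendsto_coe.1 <| tendsto_of_le_liminf_of_limsup_le
    ((le_lscHull_of_lowerSemicontinuousAt hf.lowerSemicontinuousAt).trans (h_liminf u hu))
    ((h_limsup u hu).trans (uscHull_le_of_upperSemicontinuousAt hf.upperSemicontinuousAt))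

theorem tendstoLocallyUniformlyOn (h : HypiConv F f) {s : Set T}
    (hf : ∀ x ∈ s, ContinuousAt f x) : TendstoLocallyUniformlyOn F f atTop s :=
  tendstoLocallyUniformlyOn_of_tendsto_uncurry (fun x hx ↦ (hf x hx).continuousWithinAt)
    fun x hx ↦ tendsto_uncurry_of_seq_tendsto fun _ hu ↦
      h.tendsto_of_continuousAt (hf x hx) (hu.mono_right nhdsWithin_le_nhds)

end HypiConv

theorem stmt1_general [MetricSpace T] {K : Set T} (hK : IsCompact K) {F : ℕ → T → ℝ} {f : T → ℝ}
    (hcont : ∀ x ∈ K, ContinuousAt f x) (hhypi : HypiConv F f) :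
    TendstoUniformlyOn F f atTop K :=
  (tendstoLocallyUniformlyOn_iff_tendstoUniformlyOn_of_compact hK).1
    (hhypi.tendstoLocallyUniformlyOn hcont)

/-- hypi-convergence implies uniform convergence on compact sets
contained in the continuity points of the limit. -/
theorem stmt1 [MetricSpace T] [LocallyCompactSpace T] [TopologicalSpace.SeparableSpace T]
    (K : Set T) (hK : IsCompact K)
    (F : ℕ → T → ℝ) (f : T → ℝ)
    (hF : ∀ n, LocBounded (F n)) (hf : LocBounded f)
    (hcont : ∀ x ∈ K, ContinuousAt f x)
    (hhypi : HypiConv F f) :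
    ∀ ε > (0 : ℝ), ∀ᶠ n in atTop, ∀ x ∈ K, |F n x - f x| < ε := by
  simpa only [Metric.tendstoUniformlyOn_iff, dist_comm (f _), Real.dist_eq] using
    stmt1_general hK hcont hhypi
end

section
/- Let (T,d) be a locally compact, separable metric space and let μ be a finite Borel measure on T whose support is contained in a compact subset of T. Suppose f_n ∈ ℓ∞_loc(T) hypi-converges to f ∈ ℓ∞_loc(T) and f is continuous at μ-almost every point of T. Then for every p ∈ [1,∞): (1) ∫ |f_{n,∨} − f_{n,∧}|^p dμ → 0 as n → ∞; and (2) for any Borel measurable functions f_n^* and f^* on T with f_{n,∧} ≤ f_n^* ≤ f_{n,∨} and f_∧ ≤ f^* ≤ f_∨, one has ∫ |f_n^* − f^*|^p dμ → 0 as n → ∞. -/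
open Filter Topology Metric

variable {T : Type*}

open MeasureTheory

/-!
The condition on all sequences `u n → x` amounts to a bound on `F n y` as `(n, y) → (∞, x)` jointly,
so any strict bound for the hulls of `f` on a compact set is eventually inherited there by the hulls
of `F n`. On a singleton this squeezes both hulls of `F n` to `f x` wherever `f` is continuous; on
the compact set carrying `μ` it bounds them uniformly, and dominated convergence applies.
-/

section Filter

variable {α β X : Type*}

theorem tendsto_extend_cofinite {e : α → β} {u : α → X} {v : β → X} {l : Filter X}
    (he : Function.Injective e) (hu : Tendsto u cofinite l) (hv : Tendsto v cofinite l) :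
    Tendsto (Function.extend e u v) cofinite l := by
  intro s hs
  have hfin : (e '' {i | u i ∉ s} ∪ {j | v j ∉ s}).Finite := ((hu hs).image e).union (hv hs)
  refine hfin.subset fun j hj ↦ ?_
  by_cases hex : ∃ i, e i = j
  · obtain ⟨i, rfl⟩ := hex
    exact .inl ⟨i, by simpa [he.extend_apply] using hj, rfl⟩
  · exact .inr (by simpa [Function.extend_apply' _ _ _ hex] using hj)

-- A sequence of counterexamples only involves some of the indices `n`; at the remaining ones it is
-- filled in by an arbitrary sequence tending to `l`.
theorem eventually_atTop_prod_of_forall_seq {l : Filter X} [l.IsCountablyGenerated] [l.NeBot]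
    {P : ℕ → X → Prop} (h : ∀ u : ℕ → X, Tendsto u atTop l → ∀ᶠ n in atTop, P n (u n)) :
    ∀ᶠ z in atTop ×ˢ l, P z.1 z.2 := by
  by_contra hP
  obtain ⟨z, hz, hzP⟩ := exists_seq_forall_of_frequently (not_eventually.1 hP)
  obtain ⟨φ, hφ, hzφ⟩ := strictMono_subseq_of_tendsto_atTop hz.fst
  obtain ⟨v, hv⟩ := exists_seq_tendsto l
  have hzφ' : Tendsto (fun k ↦ (z (φ k)).2) atTop l := hz.snd.comp hφ.tendsto_atTop
  have hu : Tendsto (Function.extend (fun k ↦ (z (φ k)).1) (fun k ↦ (z (φ k)).2) v) atTop l := by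
    rw [← Nat.cofinite_eq_atTop] at hzφ' hv ⊢
    exact tendsto_extend_cofinite hzφ.injective hzφ' hv
  obtain ⟨k, hk⟩ := (hzφ.tendsto_atTop.eventually (h _ hu)).exists
  exact hzP (φ k) (hzφ.injective.extend_apply (fun j ↦ (z (φ j)).2) v k ▸ hk)

end Filter

theorem abs_toReal_le_of_mem_Icc {a : EReal} {M : ℝ} (ha : a ∈ Set.Icc ((-M : ℝ) : EReal) M) :
    |a.toReal| ≤ M := by
  lift a to ℝ using ⟨(ha.2.trans_lt (EReal.coe_lt_top M)).ne,
    ((EReal.bot_lt_coe (-M)).trans_le ha.1).ne'⟩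
  exact abs_le.2 ⟨EReal.coe_le_coe_iff.1 ha.1, EReal.coe_le_coe_iff.1 ha.2⟩

theorem tendsto_integral_norm_sub_rpow_zero {ι α E : Type*} [NormedAddCommGroup E]
    [MeasurableSpace α] {μ : Measure α} [IsFiniteMeasure μ] {l : Filter ι} [l.IsCountablyGenerated]
    {G H : ι → α → E} {g : α → E} {C D p : ℝ} (hp : 0 < p)
    (hG : ∀ i, AEStronglyMeasurable (G i) μ) (hH : ∀ i, AEStronglyMeasurable (H i) μ)
    (hGC : ∀ᶠ i in l, ∀ᵐ x ∂μ, ‖G i x‖ ≤ C) (hHD : ∀ᶠ i in l, ∀ᵐ x ∂μ, ‖H i x‖ ≤ D)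
    (hGg : ∀ᵐ x ∂μ, Tendsto (G · x) l (𝓝 (g x))) (hHg : ∀ᵐ x ∂μ, Tendsto (H · x) l (𝓝 (g x))) :
    Tendsto (fun i ↦ ∫ x, ‖G i x - H i x‖ ^ p ∂μ) l (𝓝 0) := by
  rw [← integral_zero α ℝ (μ := μ)]
  refine tendsto_integral_filter_of_dominated_convergence (fun _ ↦ (C + D) ^ p)
    (.of_forall fun i ↦ ?_) ?_ (integrable_const _) ?_
  · exact (((hG i).sub (hH i)).norm.aemeasurable.pow_const p).aestronglyMeasurable
  · filter_upwards [hGC, hHD] with i hGi hHi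
    filter_upwards [hGi, hHi] with x hGx hHx
    rw [Real.norm_of_nonneg (by positivity)]
    gcongr
    exact norm_sub_le_of_le hGx hHx
  · filter_upwards [hGg, hHg] with x hGx hHx
    have hsub : Tendsto (fun i ↦ ‖G i x - H i x‖) l (𝓝 0) := by
      simpa only [sub_self, norm_zero] using (hGx.sub hHx).norm
    simpa only [Real.zero_rpow hp.ne'] using hsub.rpow_const (.inr hp.le)

/-- The half of hypi-convergence that constrains all sequences `u n → x`, i.e. conditions (a) and
(c) without the recovery sequences of (b) and (d). -/
structure HypiSandwiched [MetricSpace T] (F : ℕ → T → ℝ) (f : T → ℝ) : Prop where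
  le_liminf (x : T) (u : ℕ → T) (hu : Tendsto u atTop (𝓝 x)) :
    lscHull f x ≤ liminf (fun n ↦ (F n (u n) : EReal)) atTop
  limsup_le (x : T) (u : ℕ → T) (hu : Tendsto u atTop (𝓝 x)) :
    limsup (fun n ↦ (F n (u n) : EReal)) atTop ≤ uscHull f x

section Hulls

variable [MetricSpace T] {F : ℕ → T → ℝ} {f : T → ℝ} {x : T} {K : Set T} {a b : EReal}

theorem HypiConv.hypiSandwiched (h : HypiConv F f) : HypiSandwiched F f :=
  ⟨fun x ↦ (h x).1, fun x ↦ (h x).2.2.1⟩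

theorem lscHull_eq_liminf (f : T → ℝ) (x : T) :
    lscHull f x = liminf (fun y ↦ (f y : EReal)) (𝓝 x) :=
  nhds_basis_ball.liminf_eq_iSup_iInf.symm

theorem uscHull_eq_limsup (f : T → ℝ) (x : T) :
    uscHull f x = limsup (fun y ↦ (f y : EReal)) (𝓝 x) :=
  nhds_basis_ball.limsup_eq_iInf_iSup.symm

theorem lscHull_le_uscHull (f : T → ℝ) (x : T) : lscHull f x ≤ uscHull f x := by
  rw [lscHull_eq_liminf, uscHull_eq_limsup]
  exact liminf_le_limsup

theorem le_lscHull (h : ∀ᶠ y in 𝓝 x, a ≤ f y) : a ≤ lscHull f x := by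
  rw [lscHull_eq_liminf]
  exact le_liminf_of_le (h := h)

theorem uscHull_le (h : ∀ᶠ y in 𝓝 x, f y ≤ b) : uscHull f x ≤ b := by
  rw [uscHull_eq_limsup]
  exact limsup_le_of_le (h := h)

theorem lowerSemicontinuous_lscHull (f : T → ℝ) : LowerSemicontinuous (lscHull f) := by
  intro x a ha
  obtain ⟨c, hac, hc⟩ := exists_between ha
  rw [lscHull_eq_liminf] at hc
  filter_upwards [(eventually_lt_of_lt_liminf hc).eventually_nhds] with y hy
  exact hac.trans_le (le_lscHull (hy.mono fun _ ↦ le_of_lt))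

theorem upperSemicontinuous_uscHull (f : T → ℝ) : UpperSemicontinuous (uscHull f) := by
  intro x b hb
  obtain ⟨c, hc, hcb⟩ := exists_between hb
  rw [uscHull_eq_limsup] at hc
  filter_upwards [(eventually_lt_of_limsup_lt hc).eventually_nhds] with y hy
  exact (uscHull_le (hy.mono fun _ ↦ le_of_lt)).trans_lt hcb

theorem lscHull_eq_of_continuousAt (hx : ContinuousAt f x) : lscHull f x = f x := by
  rw [lscHull_eq_liminf]
  exact (EReal.tendsto_coe.2 hx).liminf_eq

theorem uscHull_eq_of_continuousAt (hx : ContinuousAt f x) : uscHull f x = f x := by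
  rw [uscHull_eq_limsup]
  exact (EReal.tendsto_coe.2 hx).limsup_eq

theorem eq_of_mem_Icc_hulls (hx : ContinuousAt f x) {c : ℝ}
    (hc : (c : EReal) ∈ Set.Icc (lscHull f x) (uscHull f x)) : c = f x := by
  rw [lscHull_eq_of_continuousAt hx, uscHull_eq_of_continuousAt hx, Set.Icc_self] at hc
  exact EReal.coe_injective hc

-- If `|f (u n)| > n` along a sequence `u n → x`, then `f` is unbounded on the compact set
-- consisting of `x` and all `u n`.
theorem LocBounded.exists_eventually_nhdsSet_abs_le (hf : LocBounded f) (hK : IsCompact K) :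
    ∃ M : ℝ, ∀ᶠ y in 𝓝ˢ K, |f y| ≤ M := by
  have hloc : ∀ x ∈ K, ∀ᶠ z : ℕ × T in atTop ×ˢ 𝓝 x, |f z.2| ≤ z.1 := fun x _ ↦
    eventually_atTop_prod_of_forall_seq (P := fun n y ↦ |f y| ≤ n) fun u hu ↦ by
      obtain ⟨M, hM⟩ := hf _ hu.isCompact_insert_range
      filter_upwards [eventually_ge_atTop ⌈M⌉₊] with n hn
      exact (hM _ (.inr ⟨n, rfl⟩)).trans (Nat.ceil_le.1 hn)
  obtain ⟨n, hn⟩ := (Eventually.curry (hK.mem_prod_nhdsSet_of_forall hloc)).exists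
  exact ⟨n, hn⟩

namespace HypiSandwiched

theorem eventually_le_lscHull (h : HypiSandwiched F f) (hK : IsCompact K)
    (ha : ∀ x ∈ K, a < lscHull f x) : ∀ᶠ n in atTop, ∀ x ∈ K, a ≤ lscHull (F n) x := by
  have hloc : ∀ x ∈ K, ∀ᶠ z in atTop ×ˢ 𝓝 x, a < F z.1 z.2 := fun x hx ↦
    eventually_atTop_prod_of_forall_seq (P := fun n y ↦ a < F n y) fun u hu ↦
      eventually_lt_of_lt_liminf ((ha x hx).trans_le (h.le_liminf x u hu))
  filter_upwards [Eventually.curry (hK.mem_prod_nhdsSet_of_forall hloc)] with n hn x hx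
  exact le_lscHull ((eventually_nhdsSet_iff_forall.1 hn x hx).mono fun _ ↦ le_of_lt)

theorem eventually_uscHull_le (h : HypiSandwiched F f) (hK : IsCompact K)
    (hb : ∀ x ∈ K, uscHull f x < b) : ∀ᶠ n in atTop, ∀ x ∈ K, uscHull (F n) x ≤ b := by
  have hloc : ∀ x ∈ K, ∀ᶠ z in atTop ×ˢ 𝓝 x, F z.1 z.2 < b := fun x hx ↦
    eventually_atTop_prod_of_forall_seq (P := fun n y ↦ F n y < b) fun u hu ↦
      eventually_lt_of_limsup_lt ((h.limsup_le x u hu).trans_lt (hb x hx))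
  filter_upwards [Eventually.curry (hK.mem_prod_nhdsSet_of_forall hloc)] with n hn x hx
  exact uscHull_le ((eventually_nhdsSet_iff_forall.1 hn x hx).mono fun _ ↦ le_of_lt)

theorem exists_eventually_abs_toReal_le (h : HypiSandwiched F f) (hf : LocBounded f)
    (hK : IsCompact K) : ∃ M : ℝ, ∀ᶠ n in atTop, ∀ x ∈ K,
      ∀ c ∈ Set.Icc (lscHull (F n) x) (uscHull (F n) x), |c.toReal| ≤ M := by
  obtain ⟨M, hM⟩ := hf.exists_eventually_nhdsSet_abs_le hK
  have hMx (x) (hx : x ∈ K) : ∀ᶠ y in 𝓝 x, |f y| ≤ M := eventually_nhdsSet_iff_forall.1 hM x hx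
  have hlower (x) (hx : x ∈ K) : ((-(M + 1) : ℝ) : EReal) < lscHull f x :=
    (EReal.coe_lt_coe_iff.2 (by linarith)).trans_le
      (le_lscHull ((hMx x hx).mono fun _ hy ↦ EReal.coe_le_coe_iff.2 (neg_le_of_abs_le hy)))
  have hupper (x) (hx : x ∈ K) : uscHull f x < ((M + 1 : ℝ) : EReal) :=
    (uscHull_le ((hMx x hx).mono fun _ hy ↦ EReal.coe_le_coe_iff.2 (le_of_abs_le hy))).trans_lt
      (EReal.coe_lt_coe_iff.2 (by linarith))
  refine ⟨M + 1, ?_⟩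
  filter_upwards [h.eventually_le_lscHull hK hlower, h.eventually_uscHull_le hK hupper]
    with n hln hun x hx c hc
  exact abs_toReal_le_of_mem_Icc ⟨(hln x hx).trans hc.1, hc.2.trans (hun x hx)⟩

theorem tendsto_of_mem_Icc_hulls (h : HypiSandwiched F f) (hx : ContinuousAt f x) {c : ℕ → EReal}
    (hc : ∀ n, c n ∈ Set.Icc (lscHull (F n) x) (uscHull (F n) x)) :
    Tendsto c atTop (𝓝 (f x)) := by
  refine tendsto_order.2 ⟨fun a ha ↦ ?_, fun b hb ↦ ?_⟩
  · rw [← lscHull_eq_of_continuousAt hx] at ha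
    obtain ⟨a', haa', ha'⟩ := exists_between ha
    filter_upwards [h.eventually_le_lscHull isCompact_singleton (by simpa using ha')] with n hn
    exact haa'.trans_le ((hn x rfl).trans (hc n).1)
  · rw [← uscHull_eq_of_continuousAt hx] at hb
    obtain ⟨b', hb', hbb'⟩ := exists_between hb
    filter_upwards [h.eventually_uscHull_le isCompact_singleton (by simpa using hb')] with n hn
    exact ((hc n).2.trans (hn x rfl)).trans_lt hbb'

variable [MeasurableSpace T] {μ : Measure T} [IsFiniteMeasure μ] {p : ℝ}

theorem tendsto_integral_hull_gap [OpensMeasurableSpace T] (h : HypiSandwiched F f)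
    (hf : LocBounded f) (hK : IsCompact K) (hμK : ∀ᵐ x ∂μ, x ∈ K)
    (hcont : ∀ᵐ x ∂μ, ContinuousAt f x) (hp : 0 < p) :
    Tendsto (fun n ↦ ∫ x, |(uscHull (F n) x).toReal - (lscHull (F n) x).toReal| ^ p ∂μ)
      atTop (𝓝 0) := by
  obtain ⟨M, hM⟩ := h.exists_eventually_abs_toReal_le hf hK
  have hu (n x) := Set.right_mem_Icc.2 (lscHull_le_uscHull (F n) x)
  have hl (n x) := Set.left_mem_Icc.2 (lscHull_le_uscHull (F n) x)
  have htoReal (r : ℝ) : Tendsto EReal.toReal (𝓝 r) (𝓝 r) :=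
    EReal.tendsto_toReal (EReal.coe_ne_top r) (EReal.coe_ne_bot r)
  refine tendsto_integral_norm_sub_rpow_zero (g := f) (C := M) (D := M) hp
    (fun n ↦ (upperSemicontinuous_uscHull (F n)).measurable.ereal_toReal.aestronglyMeasurable)
    (fun n ↦ (lowerSemicontinuous_lscHull (F n)).measurable.ereal_toReal.aestronglyMeasurable)
    (hM.mono fun n hn ↦ hμK.mono fun x hx ↦ hn x hx _ (hu n x))
    (hM.mono fun n hn ↦ hμK.mono fun x hx ↦ hn x hx _ (hl n x))
    (hcont.mono fun x hx ↦ ?_) (hcont.mono fun x hx ↦ ?_)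
  · exact (htoReal (f x)).comp (h.tendsto_of_mem_Icc_hulls hx (hu · x))
  · exact (htoReal (f x)).comp (h.tendsto_of_mem_Icc_hulls hx (hl · x))

theorem tendsto_integral_abs_sub_rpow (h : HypiSandwiched F f)
    (hf : LocBounded f) (hK : IsCompact K) (hμK : ∀ᵐ x ∂μ, x ∈ K)
    (hcont : ∀ᵐ x ∂μ, ContinuousAt f x) (hp : 0 < p) {Fs : ℕ → T → ℝ} {fs : T → ℝ}
    (hFs : ∀ n, AEMeasurable (Fs n) μ)
    (hFs_mem : ∀ n x, (Fs n x : EReal) ∈ Set.Icc (lscHull (F n) x) (uscHull (F n) x))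
    (hfs_mem : ∀ x, (fs x : EReal) ∈ Set.Icc (lscHull f x) (uscHull f x)) :
    Tendsto (fun n ↦ ∫ x, |Fs n x - fs x| ^ p ∂μ) atTop (𝓝 0) := by
  obtain ⟨M, hM⟩ := h.exists_eventually_abs_toReal_le hf hK
  obtain ⟨M', hM'⟩ := hf K hK
  have hfs_eq : ∀ᵐ x ∂μ, fs x = f x := hcont.mono fun x hx ↦ eq_of_mem_Icc_hulls hx (hfs_mem x)
  have hlim : ∀ᵐ x ∂μ, Tendsto (Fs · x) atTop (𝓝 (fs x)) := by
    filter_upwards [hcont, hfs_eq] with x hx hfx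
    rw [hfx]
    exact EReal.tendsto_coe.1 (h.tendsto_of_mem_Icc_hulls hx (hFs_mem · x))
  have hfs : AEMeasurable fs μ := aemeasurable_of_tendsto_metrizable_ae atTop hFs hlim
  refine tendsto_integral_norm_sub_rpow_zero (H := fun _ ↦ fs) (C := M) (D := M') hp
    (fun n ↦ (hFs n).aestronglyMeasurable) (fun _ ↦ hfs.aestronglyMeasurable)
    (hM.mono fun n hn ↦ hμK.mono fun x hx ↦ hn x hx _ (hFs_mem n x)) (.of_forall fun _ ↦ ?_)
    hlim (.of_forall fun _ ↦ tendsto_const_nhds)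
  filter_upwards [hμK, hfs_eq] with x hx hfx
  rw [hfx]
  exact hM' x hx

end HypiSandwiched

end Hulls

theorem stmt3_general [MetricSpace T] [MeasurableSpace T] [OpensMeasurableSpace T]
    (μ : Measure T) [IsFiniteMeasure μ]
    (hsupp : ∃ K : Set T, IsCompact K ∧ μ Kᶜ = 0)
    (F : ℕ → T → ℝ) (f : T → ℝ) (hf : LocBounded f) (hF : HypiSandwiched F f)
    (hcont : ∀ᵐ x ∂μ, ContinuousAt f x) (p : ℝ) (hp : 0 < p) :
    Tendsto (fun n ↦ ∫ x, |(uscHull (F n) x).toReal - (lscHull (F n) x).toReal| ^ p ∂μ)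
        atTop (𝓝 0) ∧
    ∀ (Fs : ℕ → T → ℝ) (fs : T → ℝ),
      (∀ n, AEMeasurable (Fs n) μ) →
      (∀ n x, lscHull (F n) x ≤ (Fs n x : EReal) ∧ (Fs n x : EReal) ≤ uscHull (F n) x) →
      (∀ x, lscHull f x ≤ (fs x : EReal) ∧ (fs x : EReal) ≤ uscHull f x) →
      Tendsto (fun n ↦ ∫ x, |Fs n x - fs x| ^ p ∂μ) atTop (𝓝 0) := by
  obtain ⟨K, hK, hμK⟩ := hsupp
  have hae : ∀ᵐ x ∂μ, x ∈ K := mem_ae_iff.2 hμK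
  exact ⟨hF.tendsto_integral_hull_gap hf hK hae hcont hp, fun Fs fs hFs hFs_mem hfs_mem ↦
    hF.tendsto_integral_abs_sub_rpow hf hK hae hcont hp hFs hFs_mem hfs_mem⟩

/-- STATEMENT 3: hypi-convergence implies `L^p` convergence with respect to a finite
Borel measure supported on a compact set, provided the limit is continuous almost
everywhere. -/
theorem stmt3 [MetricSpace T] [LocallyCompactSpace T] [TopologicalSpace.SeparableSpace T]
    [MeasurableSpace T] [BorelSpace T]
    (μ : Measure T) [IsFiniteMeasure μ]
    (hsupp : ∃ K : Set T, IsCompact K ∧ μ Kᶜ = 0)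
    (F : ℕ → T → ℝ) (f : T → ℝ)
    (hF : ∀ n, LocBounded (F n)) (hf : LocBounded f)
    (hhypi : HypiConv F f)
    (hcont : ∀ᵐ x ∂μ, ContinuousAt f x)
    (p : ℝ) (hp : 1 ≤ p) :
    Tendsto (fun n => ∫ x, |(uscHull (F n) x).toReal - (lscHull (F n) x).toReal| ^ p ∂μ)
        atTop (𝓝 0) ∧
    ∀ (Fs : ℕ → T → ℝ) (fs : T → ℝ),
      (∀ n, Measurable (Fs n)) → Measurable fs →
      (∀ n x, lscHull (F n) x ≤ (Fs n x : EReal) ∧ (Fs n x : EReal) ≤ uscHull (F n) x) →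
      (∀ x, lscHull f x ≤ (fs x : EReal) ∧ (fs x : EReal) ≤ uscHull f x) →
      Tendsto (fun n => ∫ x, |Fs n x - fs x| ^ p ∂μ) atTop (𝓝 0) := by
  have h := stmt3_general μ hsupp F f hf hhypi.hypiSandwiched hcont p (by linarith)
  exact ⟨h.1, fun Fs fs hFs _ ↦ h.2 Fs fs fun n ↦ (hFs n).aemeasurable⟩
end

section
/- Let (T,d) be a metric space, let E ⊆ A ⊆ T with E dense in T, and let f : A → ℝ be continuous. Let f|_E denote the restriction of f to E. Then (f|_E)_∧^{E:T} = f_∧^{A:T} and (f|_E)_∨^{E:T} = f_∨^{A:T} as functions on T. -/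
open Filter Topology Metric

variable {T : Type*}

/-- Lower semicontinuous extension to `T` of a function defined (at least) on `A`:
`f_∧^{A:T}(x) = sup_{ε>0} inf f(B(x,ε) ∩ A)`, with values in the extended reals. -/
noncomputable def lscExt [MetricSpace T] (A : Set T) (f : T → ℝ) (x : T) : EReal :=
  ⨆ (ε : ℝ) (_ : 0 < ε), ⨅ (y : T) (_ : y ∈ Metric.ball x ε ∩ A), (f y : EReal)

/-- Upper semicontinuous extension to `T` of a function defined (at least) on `A`:
`f_∨^{A:T}(x) = inf_{ε>0} sup f(B(x,ε) ∩ A)`. -/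
noncomputable def uscExt [MetricSpace T] (A : Set T) (f : T → ℝ) (x : T) : EReal :=
  ⨅ (ε : ℝ) (_ : 0 < ε), ⨆ (y : T) (_ : y ∈ Metric.ball x ε ∩ A), (f y : EReal)

/-!
For a ball `B`, density gives `B ∩ E ⊆ B ∩ A ⊆ closure (B ∩ E)`. If `f` is upper semicontinuous on
`A` and at least `c` on `B ∩ E`, then it is at least `c` on `B ∩ A`, so its infima over the two sets
agree; the two lower extensions are thus equal radius by radius, before the supremum over `ε` is
taken. The upper extensions are handled by reversing the order.
-/

section Closure

variable {X γ : Type*} [TopologicalSpace X] [CompleteLinearOrder γ] {s t : Set X} {g : X → γ}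

theorem inter_subset_closure_inter_of_isOpen {u : Set X} (hu : IsOpen u) (hts : t ⊆ closure s) :
    u ∩ t ⊆ closure (u ∩ s) :=
  (Set.inter_subset_inter_right u hts).trans hu.inter_closure

theorem biInf_eq_of_upperSemicontinuousOn (hst : s ⊆ t) (hts : t ⊆ closure s)
    (hg : UpperSemicontinuousOn g t) : ⨅ y ∈ s, g y = ⨅ y ∈ t, g y := by
  refine le_antisymm (le_iInf₂ fun y hy => ?_) (biInf_mono hst)
  by_contra! hlt
  have hnear : ∀ᶠ z in 𝓝[s] y, g z < ⨅ y ∈ s, g y :=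
    (hg y hy _ hlt).filter_mono (nhdsWithin_mono y hst)
  have : (𝓝[s] y).NeBot := mem_closure_iff_nhdsWithin_neBot.mp (hts hy)
  obtain ⟨z, hz, hzs⟩ := (hnear.and self_mem_nhdsWithin).exists
  exact hz.not_ge (iInf₂_le z hzs)

theorem biSup_eq_of_lowerSemicontinuousOn (hst : s ⊆ t) (hts : t ⊆ closure s)
    (hg : LowerSemicontinuousOn g t) : ⨆ y ∈ s, g y = ⨆ y ∈ t, g y :=
  biInf_eq_of_upperSemicontinuousOn (γ := γᵒᵈ) hst hts hg

end Closure

section Extensions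

variable [MetricSpace T] {E A : Set T} {f : T → ℝ}

theorem lscExt_eq_of_upperSemicontinuousOn (hEA : E ⊆ A) (hAE : A ⊆ closure E)
    (hf : UpperSemicontinuousOn f A) (x : T) : lscExt E f x = lscExt A f x := by
  have hf_coe : UpperSemicontinuousOn (fun y => (f y : EReal)) A :=
    continuous_coe_real_ereal.comp_upperSemicontinuousOn hf EReal.coe_strictMono.monotone
  exact iSup_congr fun ε => iSup_congr fun _ =>
    biInf_eq_of_upperSemicontinuousOn (Set.inter_subset_inter_right _ hEA)
      (inter_subset_closure_inter_of_isOpen isOpen_ball hAE) (hf_coe.mono Set.inter_subset_right)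

theorem uscExt_eq_of_lowerSemicontinuousOn (hEA : E ⊆ A) (hAE : A ⊆ closure E)
    (hf : LowerSemicontinuousOn f A) (x : T) : uscExt E f x = uscExt A f x := by
  have hf_coe : LowerSemicontinuousOn (fun y => (f y : EReal)) A :=
    continuous_coe_real_ereal.comp_lowerSemicontinuousOn hf EReal.coe_strictMono.monotone
  exact iInf_congr fun ε => iInf_congr fun _ =>
    biSup_eq_of_lowerSemicontinuousOn (Set.inter_subset_inter_right _ hEA)
      (inter_subset_closure_inter_of_isOpen isOpen_ball hAE) (hf_coe.mono Set.inter_subset_right)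

theorem stmt8_general (hEA : E ⊆ A) (hAE : A ⊆ closure E) :
    (UpperSemicontinuousOn f A → ∀ x : T, lscExt E f x = lscExt A f x) ∧
    (LowerSemicontinuousOn f A → ∀ x : T, uscExt E f x = uscExt A f x) :=
  ⟨lscExt_eq_of_upperSemicontinuousOn hEA hAE, uscExt_eq_of_lowerSemicontinuousOn hEA hAE⟩

end Extensions

/-- STATEMENT 8: if `E ⊆ A ⊆ T` with `E` dense in `T` and `f` is continuous on `A`,
then the semicontinuous extensions of `f|_E` and of `f` to `T` coincide. -/
theorem stmt8 [MetricSpace T] (E A : Set T) (hEA : E ⊆ A) (hE : Dense E)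
    (f : T → ℝ) (hf : ContinuousOn f A) :
    (∀ x : T, lscExt E f x = lscExt A f x) ∧
    (∀ x : T, uscExt E f x = uscExt A f x) := by
  have hext := stmt8_general (f := f) hEA fun x _ => hE x
  exact ⟨hext.1 hf.upperSemicontinuousOn, hext.2 hf.lowerSemicontinuousOn⟩
end

section
/- Let (D,d) and (E,e) be pseudometric spaces and let g : D → E be an arbitrary function. Then the set D_g of points x ∈ D at which g is not continuous is a Borel subset of D. More generally, for every Borel set B ⊆ E, the set g^{-1}(B) \ D_g is a Borel subset of D. -/
/-!
The continuity points of `g` form a Gδ set: for each `n ≥ 1`, the points having a neighbourhood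
whose image under `g` has diameter less than `1 / n` form an open set, and the continuity set is
the intersection of these. The restriction of `g` to this Borel set is continuous, hence Borel
measurable, and a Borel subset of a Borel subspace is Borel in the whole space.
-/

open TopologicalSpace

theorem measurableSet_inter_preimage_of_continuousOn {X Y : Type*}
    [TopologicalSpace X] [MeasurableSpace X] [OpensMeasurableSpace X]
    [TopologicalSpace Y] [MeasurableSpace Y] [BorelSpace Y]
    {f : X → Y} {s : Set X} {t : Set Y} (hf : ContinuousOn f s)
    (hs : MeasurableSet s) (ht : MeasurableSet t) : MeasurableSet (s ∩ f ⁻¹' t) := by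
  have hrestrict : Measurable (s.domRestrict f) := hf.domRestrict.measurable
  rw [← Subtype.image_preimage_coe]
  exact hs.subtype_image (hrestrict ht)

theorem stmt11_general {D E : Type*} [TopologicalSpace D] [TopologicalSpace E]
    [PseudoMetrizableSpace E] [MeasurableSpace D] [OpensMeasurableSpace D]
    [MeasurableSpace E] [BorelSpace E] (g : D → E) :
    MeasurableSet {x : D | ¬ ContinuousAt g x} ∧
    ∀ B : Set E, MeasurableSet B →
      MeasurableSet (g ⁻¹' B \ {x : D | ¬ ContinuousAt g x}) := by
  have hcont : ContinuousOn g {x | ContinuousAt g x} := fun _ hx ↦ hx.continuousWithinAt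
  have hmeas : MeasurableSet {x | ContinuousAt g x} :=
    (IsGδ.setOfPred_continuousAt g).measurableSet
  refine ⟨hmeas.compl, fun B hB ↦ ?_⟩
  have hdiff : g ⁻¹' B \ {x | ¬ ContinuousAt g x} = {x | ContinuousAt g x} ∩ g ⁻¹' B := by
    grind
  rw [hdiff]
  exact measurableSet_inter_preimage_of_continuousOn hcont hmeas hB

/-- STATEMENT 11 (Measurability): for an arbitrary map `g` between pseudometric
spaces, the set of discontinuity points of `g` is Borel, and for every Borel set
`B` in the codomain, `g ⁻¹' B \ D_g` is Borel. -/
theorem stmt11 {D E : Type*} [PseudoMetricSpace D] [PseudoMetricSpace E]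
    [MeasurableSpace D] [BorelSpace D] [MeasurableSpace E] [BorelSpace E]
    (g : D → E) :
    MeasurableSet {x : D | ¬ ContinuousAt g x} ∧
    ∀ B : Set E, MeasurableSet B →
      MeasurableSet (g ⁻¹' B \ {x : D | ¬ ContinuousAt g x}) :=
  stmt11_general g
end

section
/- Let (D,d) be a pseudometric space and (E,e) a metric space. For each integer n ≥ 0 let D_n ⊆ D and g_n : D_n → E. Assume that for every x_0 ∈ D_0, every strictly increasing sequence (n_k) of positive integers, and every choice of points x_{n_k} ∈ D_{n_k} with x_{n_k} → x_0 in D, one has g_{n_k}(x_{n_k}) → g_0(x_0) in E. Define D_∞ = ⋂_{k≥1} cl(⋃_{m≥k} D_m), the set of limits of subsequences of points from the D_n. Then the restriction of g_0 to D_0 ∩ D_∞ is continuous (with respect to the subspace topology induced by d). -/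
open Filter Topology

/-!
The hypothesis says that `g n z` tends to `g 0 x` as `n → ∞` and `z → x` jointly along the pairs
with `z ∈ Dn n`, and `x ∈ D_∞` says that such pairs occur arbitrarily close to `(∞, x)`. If `V` is
a closed neighbourhood of `g 0 x`, then `g n z ∈ V` for all large `n` and all `z ∈ Dn n` in some
open `U ∋ x`; every `y ∈ U ∩ Dn 0 ∩ D_∞` is approached by such pairs, so `g 0 y ∈ V`.
-/

section

variable {ι X Y : Type*}

lemma tendsto_atTop_prod_inf_principal_of_forall_strictMono {l : Filter X} [l.IsCountablyGenerated]
    {l' : Filter Y} {S : Set (ℕ × X)} {F : ℕ × X → Y}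
    (hF : ∀ φ : ℕ → ℕ, StrictMono φ → ∀ u : ℕ → X, (∀ k, (φ k, u k) ∈ S) → Tendsto u atTop l →
      Tendsto (fun k => F (φ k, u k)) atTop l') :
    Tendsto F (atTop ×ˢ l ⊓ 𝓟 S) l' := by
  refine tendsto_of_subseq_tendsto fun p hp => ?_
  obtain ⟨hp_prod, hp_mem⟩ := tendsto_inf.1 hp
  obtain ⟨hp_fst, hp_snd⟩ := tendsto_prod_iff'.1 hp_prod
  obtain ⟨N, hN⟩ := eventually_atTop.1 (tendsto_principal.1 hp_mem)
  have shift_tendsto : Tendsto (· + N) atTop atTop := tendsto_add_atTop_nat N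
  obtain ⟨ψ, hψ, hpψ⟩ := strictMono_subseq_of_tendsto_atTop (hp_fst.comp shift_tendsto)
  exact ⟨fun k => ψ k + N, hF _ hpψ _ (fun k => hN _ (Nat.le_add_left N (ψ k)))
    (hp_snd.comp (shift_tendsto.comp hψ.tendsto_atTop))⟩

variable [TopologicalSpace X]

lemma frequently_atTop_prod_nhds_iff [Preorder ι] [IsDirectedOrder ι] [Nonempty ι]
    {s : ι → Set X} {x : X} :
    (∃ᶠ p in atTop ×ˢ 𝓝 x, p.2 ∈ s p.1) ↔
      ∀ᶠ k in atTop, x ∈ closure (⋃ (m : ι) (_ : k ≤ m), s m) := by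
  constructor
  · refine fun hs => Eventually.of_forall fun k => mem_closure_iff_frequently.2 ?_
    have tail_and_mem := hs.and_eventually ((eventually_ge_atTop k).prod_inl (𝓝 x))
    exact tendsto_snd.frequently
      (tail_and_mem.mono fun p hp => Set.mem_iUnion₂.2 ⟨p.1, hp.2, hp.1⟩)
  · intro hx hs
    obtain ⟨T, hT, U, hU, hTU⟩ := eventually_prod_iff.1 hs
    obtain ⟨k, hxk, hTk⟩ := (hx.and (eventually_forall_ge_atTop.2 hT)).exists
    obtain ⟨z, hz, hzU⟩ := ((mem_closure_iff_frequently.1 hxk).and_eventually hU).exists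
    obtain ⟨m, hkm, hzm⟩ := Set.mem_iUnion₂.1 hz
    exact hTU (hTk m hkm) hzU hzm

lemma continuousOn_of_tendsto_prod_nhds [TopologicalSpace Y] [RegularSpace Y] {l : Filter ι}
    {S : Set (ι × X)} {F : ι × X → Y} {f : X → Y} {A : Set X}
    (hF : ∀ x ∈ A, Tendsto F (l ×ˢ 𝓝 x ⊓ 𝓟 S) (𝓝 (f x)))
    (hS : ∀ x ∈ A, ∃ᶠ p in l ×ˢ 𝓝 x, p ∈ S) : ContinuousOn f A := by
  intro x hx
  refine (closed_nhds_basis (f x)).tendsto_right_iff.2 fun V ⟨hV, hV_closed⟩ => ?_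
  have near_x : ∀ᶠ p in l ×ˢ 𝓝 x, p ∈ S → F p ∈ V := eventually_inf_principal.1 (hF x hx hV)
  have near_nearby : ∀ᶠ y in 𝓝 x, ∀ᶠ p in l ×ˢ 𝓝 y, p ∈ S → F p ∈ V := by
    obtain ⟨T, hT, U, hU, hTU⟩ := eventually_prod_iff.1 near_x
    filter_upwards [eventually_eventually_nhds.2 hU] with y hy
    exact eventually_prod_iff.2 ⟨T, hT, U, hy, hTU⟩
  filter_upwards [self_mem_nhdsWithin, nhdsWithin_le_nhds near_nearby] with y hy near_y
  have : NeBot (l ×ˢ 𝓝 y ⊓ 𝓟 S) := frequently_mem_iff_neBot.1 (hS y hy)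
  exact hV_closed.mem_of_tendsto (hF y hy) (eventually_inf_principal.2 near_y)

theorem stmt12_general [FirstCountableTopology X] [TopologicalSpace Y] [RegularSpace Y]
    (Dn : ℕ → Set X) (g : ℕ → X → Y)
    (hconv : ∀ x ∈ Dn 0, ∀ φ : ℕ → ℕ, StrictMono φ → (∀ k, 0 < φ k) →
      ∀ u : ℕ → X, (∀ k, u k ∈ Dn (φ k)) → Tendsto u atTop (𝓝 x) →
        Tendsto (fun k => g (φ k) (u k)) atTop (𝓝 (g 0 x))) :
    ContinuousOn (g 0)
      (Dn 0 ∩ ⋂ (k : ℕ) (_ : 1 ≤ k), closure (⋃ (m : ℕ) (_ : k ≤ m), Dn m)) := by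
  refine continuousOn_of_tendsto_prod_nhds (l := atTop) (S := {p | p.2 ∈ Dn p.1 ∧ 0 < p.1})
    (F := fun p => g p.1 p.2) ?_ ?_
  · rintro x ⟨hx, -⟩
    exact tendsto_atTop_prod_inf_principal_of_forall_strictMono fun φ hφ u hu =>
      hconv x hx φ hφ (fun k => (hu k).2) u fun k => (hu k).1
  · rintro x ⟨-, hx⟩
    have hx_closure : ∀ᶠ k in atTop, x ∈ closure (⋃ (m : ℕ) (_ : k ≤ m), Dn m) :=
      (eventually_ge_atTop 1).mono (Set.mem_iInter₂.1 hx)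
    exact (frequently_atTop_prod_nhds_iff.2 hx_closure).and_eventually
      ((eventually_gt_atTop 0).prod_inl _)

end

/-- STATEMENT 12 (Addendum to the extended continuous mapping theorem): if
`g_{n_k}(x_{n_k}) → g_0(x_0)` whenever `x_{n_k} ∈ D_{n_k}` converges to
`x_0 ∈ D_0` along strictly increasing sequences of positive integers, then `g_0`
is continuous on `D_0 ∩ D_∞`, where `D_∞ = ⋂_{k ≥ 1} cl(⋃_{m ≥ k} D_m)`. -/
theorem stmt12 {D E : Type*} [PseudoMetricSpace D] [MetricSpace E]
    (Dn : ℕ → Set D) (g : ℕ → D → E)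
    (hconv : ∀ x0 ∈ Dn 0, ∀ φ : ℕ → ℕ, StrictMono φ → (∀ k, 0 < φ k) →
      ∀ u : ℕ → D, (∀ k, u k ∈ Dn (φ k)) → Tendsto u atTop (𝓝 x0) →
        Tendsto (fun k => g (φ k) (u k)) atTop (𝓝 (g 0 x0))) :
    ContinuousOn (g 0)
      (Dn 0 ∩ ⋂ (k : ℕ) (_ : 1 ≤ k), closure (⋃ (m : ℕ) (_ : k ≤ m), Dn m)) :=
  stmt12_general Dn g hconv
end
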